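/- arXiv:1707.09302 — 4 statements merged into one kernel-verified Lean document; each statement's English description precedes it below -/
import Mathlib

section
/- Let A be a unital associative algebra over ℂ, and let a = (a_j), c = (c_ℓ), d = (d_r) be finite families of elements of A such that [a_j, a_k] is a scalar multiple of the identity for all j, k, and [a_j, c_ℓ] = 2i(Θ₁₁)_{jℓ}·1, [a_j, d_r] = 2i(Θ₁₂)_{jr}·1 for real matrices Θ₁₁, Θ₁₂. Then for any complex square matrix F and complex matrix G of compatible dimensions, [aᵀFa, cᵀGd] = 4i ( aᵀ S(F) Θ₁₁ G d + cᵀ G Θ₁₂ᵀ S(F) a ), where S(F) := (F + Fᵀ)/2 is the symmetrizer. -/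
/-!
With `Q = aᵀFa`, the map `[Q, ·]` is a derivation, so
`[Q, c_l d_r] = [Q, c_l] d_r + c_l [Q, d_r]`. If `x` satisfies `[a_j, x] = t_j • 1`, then
`[a_j a_k, x] = t_k a_j + t_j a_k`, hence `[Q, x] = ∑ j, ((F + Fᵀ) t)_j a_j`
(`quadratic_commutator`). Taking for `t` the columns of `2i Θ₁₁` and `2i Θ₁₂` and summing against
`G` gives the two terms of the formula.
-/

open Matrix

/-- The commutator of a quadratic form `aᵀFa` with an element `x` whose commutators with the
`a j` are the scalars `t j` is the linear form with coefficient vector `(F + Fᵀ) t`. -/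
theorem quadratic_commutator {A : Type*} [Ring A] [Algebra ℂ A] {p : ℕ}
    (a : Fin p → A) (F : Matrix (Fin p) (Fin p) ℂ) (x : A) (t : Fin p → ℂ)
    (h : ∀ j, a j * x - x * a j = t j • (1 : A)) :
    (∑ j, ∑ k, F j k • (a j * a k)) * x - x * (∑ j, ∑ k, F j k • (a j * a k))
      = ∑ j, (∑ k, (F j k + F k j) * t k) • a j := by
  have key : ∀ j k, a j * a k * x - x * (a j * a k) = t k • a j + t j • a k := by
    intro j k
    calc a j * a k * x - x * (a j * a k)
        = a j * (a k * x - x * a k) + (a j * x - x * a j) * a k := by noncomm_ring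
      _ = t k • a j + t j • a k := by rw [h, h]; simp
  calc _ = ∑ j, ∑ k, F j k • (a j * a k * x - x * (a j * a k)) := by
        simp only [Finset.sum_mul, Finset.mul_sum, smul_mul_assoc, mul_smul_comm, smul_sub,
          Finset.sum_sub_distrib]
    _ = (∑ j, ∑ k, (F j k * t k) • a j) + ∑ j, ∑ k, (F j k * t j) • a k := by
        simp only [key, smul_add, smul_smul, Finset.sum_add_distrib]
    _ = _ := by
        rw [Finset.sum_comm (f := fun j k => (F j k * t j) • a k)]
        simp only [add_mul, Finset.sum_add_distrib, add_smul, Finset.sum_smul]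

/-- Commutator of a quadratic form `aᵀFa` with a bilinear form `cᵀGd`, for families of
elements of a unital associative `ℂ`-algebra whose relevant commutators are scalar
multiples of the identity (Lemma A.1, equation (quadcom2)). -/
theorem commutator_quadratic_bilinear_form
    {A : Type*} [Ring A] [Algebra ℂ A] {p u v : ℕ}
    (a : Fin p → A) (c : Fin u → A) (d : Fin v → A)
    (haa : ∀ j k, ∃ z : ℂ, a j * a k - a k * a j = z • (1 : A))
    (Θ11 : Matrix (Fin p) (Fin u) ℝ) (Θ12 : Matrix (Fin p) (Fin v) ℝ)
    (hac : ∀ j ℓ, a j * c ℓ - c ℓ * a j = (2 * Complex.I * (Θ11 j ℓ : ℂ)) • (1 : A))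
    (had : ∀ j r, a j * d r - d r * a j = (2 * Complex.I * (Θ12 j r : ℂ)) • (1 : A))
    (F : Matrix (Fin p) (Fin p) ℂ) (G : Matrix (Fin u) (Fin v) ℂ) :
    (∑ j, ∑ k, F j k • (a j * a k)) * (∑ l, ∑ r, G l r • (c l * d r))
      - (∑ l, ∑ r, G l r • (c l * d r)) * (∑ j, ∑ k, F j k • (a j * a k))
    = (4 * Complex.I) •
        ( (∑ j, ∑ r, (((1 : ℂ) / 2) • (F + Fᵀ) * Θ11.map Complex.ofReal * G) j r • (a j * d r))
        + (∑ l, ∑ j, (G * (Θ12.map Complex.ofReal)ᵀ * (((1 : ℂ) / 2) • (F + Fᵀ))) l j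
            • (c l * a j)) ) := by
  have hc := fun l => quadratic_commutator a F (c l) _ (fun j => hac j l)
  have hd := fun r => quadratic_commutator a F (d r) _ (fun j => had j r)
  set Q := ∑ j, ∑ k, F j k • (a j * a k)
  have leib : ∀ l r, Q * (c l * d r) - c l * d r * Q
      = (Q * c l - c l * Q) * d r + c l * (Q * d r - d r * Q) := by
    intro l r
    noncomm_ring
  have expand : Q * (∑ l, ∑ r, G l r • (c l * d r)) - (∑ l, ∑ r, G l r • (c l * d r)) * Q
      = (∑ l, ∑ r, G l r • ((Q * c l - c l * Q) * d r))
        + ∑ l, ∑ r, G l r • (c l * (Q * d r - d r * Q)) := by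
    simp only [← Finset.sum_add_distrib, ← smul_add, ← leib]
    simp only [Finset.sum_mul, Finset.mul_sum, smul_mul_assoc, mul_smul_comm, smul_sub,
      Finset.sum_sub_distrib]
  rw [expand, smul_add]
  congr 1
  · simp only [hc, Finset.sum_mul, Finset.smul_sum, smul_mul_assoc, smul_smul]
    -- Both sides are sums over `j, r` of coefficients times `a j * d r`.
    rw [Finset.sum_congr rfl fun l _ => Finset.sum_comm, Finset.sum_comm]
    refine Finset.sum_congr rfl fun j _ => ?_
    rw [Finset.sum_comm]
    refine Finset.sum_congr rfl fun r _ => ?_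
    rw [← Finset.sum_smul]
    congr 1
    simp only [Matrix.mul_apply, Matrix.smul_apply, Matrix.add_apply, Matrix.transpose_apply,
      Matrix.map_apply, Finset.mul_sum, Finset.sum_mul, smul_eq_mul]
    refine Finset.sum_congr rfl fun l _ => Finset.sum_congr rfl fun k _ => ?_
    ring
  · simp only [hd, Finset.mul_sum, Finset.smul_sum, mul_smul_comm, smul_smul]
    refine Finset.sum_congr rfl fun l _ => ?_
    rw [Finset.sum_comm]
    refine Finset.sum_congr rfl fun j _ => ?_
    rw [← Finset.sum_smul]
    congr 1
    simp only [Matrix.mul_apply, Matrix.smul_apply, Matrix.add_apply, Matrix.transpose_apply,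
      Matrix.map_apply, Finset.mul_sum, Finset.sum_mul, smul_eq_mul]
    rw [Finset.sum_comm]
    refine Finset.sum_congr rfl fun k _ => Finset.sum_congr rfl fun r _ => ?_
    ring
end

section
/- Let r ≥ 2, and let N : ℝ → [0, +∞) be a measurable, bounded, integrable function. Then for every t > 0, ∫_{[0,t]^r} ∏_{j=1}^{r} N(t_j − t_{j+1}) dt₁ ⋯ dt_r ≤ t · N^{*r}(0), where t_{r+1} := t₁ and N^{*r}(0) := ∫_{ℝ^{r−1}} ∏_{j=1}^{r} N(τ_j − τ_{j+1}) dτ₂ ⋯ dτ_r is the r-fold self-convolution of N evaluated at 0 (with the conventions τ₁ := 0 and τ_{r+1} := 0). -/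
/-!
The cyclic product `∏ j, N (x j - x (j + 1))` is nonnegative and invariant under translating all
coordinates of `x` by the same amount. Enlarge the box to the strip where only the first coordinate
`a` is confined to `[0, t]`; by Tonelli, and by the translation `τ ↦ τ - a` of the remaining
coordinates, the integral over the strip is exactly `t` times the convolution integral
(`lintegral_slice`). The computation is done with the Lebesgue integral in `ℝ≥0∞`. Going back to
Bochner integrals requires the convolution integral to be finite: bounding the factor that closes
the cycle by the supremum of `N` leaves an open chain, which integrates to `(∫ N) ^ (r - 1)`
(`lintegral_chain`).
-/

open MeasureTheory
open scoped ENNReal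

lemma lintegral_fin_cons {n : ℕ} (F : (Fin (n + 1) → ℝ) → ℝ≥0∞) (hF : Measurable F) :
    ∫⁻ x, F x = ∫⁻ a : ℝ, ∫⁻ τ : Fin n → ℝ, F (Fin.cons a τ) := by
  have h := (volume_preserving_piFinSuccAbove (fun _ : Fin (n + 1) => ℝ) 0).symm
  rw [← h.lintegral_comp hF, Measure.volume_eq_prod, lintegral_prod]
  · simp [MeasurableEquiv.piFinSuccAbove_symm_apply, Fin.consEquiv]
  · exact (hF.comp (MeasurableEquiv.measurable _)).aemeasurable

lemma measurable_fin_cons {n : ℕ} (a : ℝ) :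
    Measurable (fun τ : Fin n → ℝ => (Fin.cons a τ : Fin (n + 1) → ℝ)) := by
  refine measurable_pi_lambda _ fun i => ?_
  refine Fin.cases ?_ (fun i => ?_) i
  · simp
  · simpa using measurable_pi_apply i

/-- The integral of an open chain started at `a` does not depend on `a` and factors. -/
lemma lintegral_chain (f : ℝ → ℝ≥0∞) (hf : Measurable f) (n : ℕ) (a : ℝ) :
    ∫⁻ τ : Fin n → ℝ, ∏ i : Fin n, f ((Fin.cons a τ : Fin (n + 1) → ℝ) i.castSucc
      - (Fin.cons a τ : Fin (n + 1) → ℝ) i.succ) = (∫⁻ x, f x) ^ n := by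
  induction n generalizing a with
  | zero => simp [volume_pi]
  | succ n ih =>
    have hm : ∀ (k : ℕ) (b : ℝ), Measurable fun τ : Fin k → ℝ =>
        ∏ i : Fin k, f ((Fin.cons b τ : Fin (k + 1) → ℝ) i.castSucc
          - (Fin.cons b τ : Fin (k + 1) → ℝ) i.succ) := by
      intro k b
      refine Finset.measurable_prod _ fun i _ => hf.comp ?_
      exact ((measurable_pi_apply _).comp (measurable_fin_cons b)).sub
        ((measurable_pi_apply _).comp (measurable_fin_cons b))
    rw [lintegral_fin_cons _ (hm _ a)]
    have h1 : ∀ (b : ℝ) (τ : Fin n → ℝ),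
        (∏ i : Fin (n + 1), f ((Fin.cons a (Fin.cons b τ : Fin (n + 1) → ℝ) :
            Fin (n + 2) → ℝ) i.castSucc
          - (Fin.cons a (Fin.cons b τ : Fin (n + 1) → ℝ) : Fin (n + 2) → ℝ) i.succ))
        = f (a - b) * ∏ i : Fin n, f ((Fin.cons b τ : Fin (n + 1) → ℝ) i.castSucc
          - (Fin.cons b τ : Fin (n + 1) → ℝ) i.succ) := by
      intro b τ
      rw [Fin.prod_univ_succ]
      simp
    simp_rw [h1]
    have h2 : ∀ b : ℝ, ∫⁻ τ : Fin n → ℝ, f (a - b) *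
        ∏ i : Fin n, f ((Fin.cons b τ : Fin (n + 1) → ℝ) i.castSucc
          - (Fin.cons b τ : Fin (n + 1) → ℝ) i.succ) = f (a - b) * (∫⁻ x, f x) ^ n := by
      intro b
      rw [lintegral_const_mul _ (hm n b), ih b]
    simp_rw [h2]
    rw [lintegral_mul_const _ (by fun_prop),
      lintegral_sub_left_eq_self f a, pow_succ, mul_comm]

/-- For a translation-invariant integrand, the integral over the remaining coordinates does not
depend on where the first coordinate is frozen. -/
lemma lintegral_slice {n : ℕ} (F : (Fin (n + 1) → ℝ) → ℝ≥0∞)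
    (hinv : ∀ (x : Fin (n + 1) → ℝ) (a : ℝ), F (fun i => x i + a) = F x) (a : ℝ) :
    ∫⁻ τ : Fin n → ℝ, F (Fin.cons a τ) = ∫⁻ τ : Fin n → ℝ, F (Fin.cons 0 τ) := by
  rw [← lintegral_sub_right_eq_self (fun τ : Fin n → ℝ => F (Fin.cons 0 τ)) (fun _ => a)]
  refine lintegral_congr fun τ => ?_
  rw [← hinv (Fin.cons 0 (τ - fun _ => a)) a]
  congr 1
  funext i
  refine Fin.cases ?_ (fun i => ?_) i <;> simp

/-- For a translation-invariant integrand, the integral over a box is at most the side length times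
the integral over the slice through `0`. -/
lemma setLIntegral_box_le {n : ℕ} (F : (Fin (n + 1) → ℝ) → ℝ≥0∞) (hF : Measurable F)
    (hinv : ∀ (x : Fin (n + 1) → ℝ) (a : ℝ), F (fun i => x i + a) = F x) (t : ℝ) :
    ∫⁻ x in Set.univ.pi (fun _ => Set.Icc 0 t), F x
      ≤ ENNReal.ofReal t * ∫⁻ τ : Fin n → ℝ, F (Fin.cons 0 τ) := by
  have hS : MeasurableSet {x : Fin (n + 1) → ℝ | x 0 ∈ Set.Icc 0 t} :=
    measurable_pi_apply 0 measurableSet_Icc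
  calc ∫⁻ x in Set.univ.pi (fun _ => Set.Icc 0 t), F x
      ≤ ∫⁻ x in {x : Fin (n + 1) → ℝ | x 0 ∈ Set.Icc 0 t}, F x :=
        lintegral_mono_set fun x hx => hx 0 (Set.mem_univ _)
    _ = ∫⁻ a : ℝ, ∫⁻ τ : Fin n → ℝ,
          {x : Fin (n + 1) → ℝ | x 0 ∈ Set.Icc 0 t}.indicator F (Fin.cons a τ) := by
        rw [← lintegral_indicator hS, lintegral_fin_cons _ (hF.indicator hS)]
    _ = ∫⁻ a : ℝ, (Set.Icc 0 t).indicator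
          (fun _ => ∫⁻ τ : Fin n → ℝ, F (Fin.cons 0 τ)) a := by
        refine lintegral_congr fun a => ?_
        by_cases ha : a ∈ Set.Icc 0 t
        · rw [Set.indicator_of_mem ha, ← lintegral_slice F hinv a]
          refine lintegral_congr fun τ => Set.indicator_of_mem ?_ _
          simpa using ha
        · rw [Set.indicator_of_notMem ha, ← lintegral_zero (μ := (volume : Measure (Fin n → ℝ)))]
          refine lintegral_congr fun τ => Set.indicator_of_notMem ?_ _
          simpa using ha
    _ = ENNReal.ofReal t * ∫⁻ τ : Fin n → ℝ, F (Fin.cons 0 τ) := by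
        rw [lintegral_indicator_const measurableSet_Icc, Real.volume_Icc, sub_zero, mul_comm]

/-- For a measurable, bounded, integrable, nonnegative function `N` on `ℝ` and `r = m + 2 ≥ 2`,
the cyclic `r`-fold integral over `[0,t]^r` of `∏_j N(t_j - t_{j+1})` (indices mod `r`) is at
most `t` times the `r`-fold self-convolution of `N` evaluated at `0`, written as an integral
over `ℝ^{r-1}` with the convention `τ₁ = 0`. -/
theorem cyclic_integral_le_convolution
    {m : ℕ} (N : ℝ → ℝ)
    (hmeas : Measurable N)
    (hbdd : ∃ C : ℝ, ∀ t : ℝ, N t ≤ C)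
    (hint : Integrable N)
    (hnonneg : ∀ t : ℝ, 0 ≤ N t)
    (t : ℝ) (ht : 0 < t) :
    (∫ ts : Fin (m + 2) → ℝ in Set.univ.pi (fun _ => Set.Icc 0 t),
        ∏ j : Fin (m + 2), N (ts j - ts (j + 1)))
      ≤ t * ∫ τ : Fin (m + 1) → ℝ,
          ∏ j : Fin (m + 2),
            N ((Fin.cons 0 τ : Fin (m + 2) → ℝ) j - (Fin.cons 0 τ : Fin (m + 2) → ℝ) (j + 1)) := by
  obtain ⟨C, hC⟩ := hbdd
  set P : (Fin (m + 2) → ℝ) → ℝ := fun x => ∏ j : Fin (m + 2), N (x j - x (j + 1)) with hP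
  have hPm : Measurable P := Finset.measurable_prod _ fun j _ =>
    hmeas.comp ((measurable_pi_apply _).sub (measurable_pi_apply _))
  have hP0 : ∀ x, 0 ≤ P x := fun x => Finset.prod_nonneg fun j _ => hnonneg _
  have hbox := setLIntegral_box_le (fun x => ENNReal.ofReal (P x)) hPm.ennreal_ofReal
    (fun x a => by simp [hP]) t
  have hfin : ∫⁻ τ : Fin (m + 1) → ℝ, ENNReal.ofReal (P (Fin.cons 0 τ)) ≠ ∞ := by
    have hf : Measurable fun x => ENNReal.ofReal (N x) := hmeas.ennreal_ofReal
    refine ne_top_of_le_ne_top ?_ (lintegral_mono (g := fun τ : Fin (m + 1) → ℝ =>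
      (∏ i : Fin (m + 1), ENNReal.ofReal (N ((Fin.cons 0 τ : Fin (m + 2) → ℝ) i.castSucc
      - (Fin.cons 0 τ : Fin (m + 2) → ℝ) i.succ))) * ENNReal.ofReal C) fun τ => ?_)
    · rw [lintegral_mul_const' _ _ ENNReal.ofReal_ne_top,
        lintegral_chain (fun x => ENNReal.ofReal (N x)) hf]
      exact ENNReal.mul_ne_top (ENNReal.pow_ne_top hint.lintegral_lt_top.ne)
        ENNReal.ofReal_ne_top
    · simp only [hP]
      rw [ENNReal.ofReal_prod_of_nonneg fun j _ => hnonneg _, Fin.prod_univ_castSucc]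
      simp only [Fin.coeSucc_eq_succ]
      gcongr
      exact hC _
  change ∫ x in Set.univ.pi (fun _ => Set.Icc 0 t), P x
    ≤ t * ∫ τ : Fin (m + 1) → ℝ, P (Fin.cons 0 τ)
  rw [integral_eq_lintegral_of_nonneg_ae (.of_forall hP0) hPm.aestronglyMeasurable,
    integral_eq_lintegral_of_nonneg_ae (.of_forall fun _ => hP0 _)
      (hPm.comp (measurable_fin_cons 0)).aestronglyMeasurable]
  calc _ ≤ (ENNReal.ofReal t * ∫⁻ τ : Fin (m + 1) → ℝ, ENNReal.ofReal (P (Fin.cons 0 τ))).toReal :=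
        ENNReal.toReal_mono (ENNReal.mul_ne_top ENNReal.ofReal_ne_top hfin) hbox
    _ = _ := by rw [ENNReal.toReal_mul, ENNReal.toReal_ofReal ht.le]
end

section
/- Let n, α, μ > 0 be real numbers and let ε ≥ nα. Then the infimum over θ ∈ [0, μ/(4α)) of the function θ ↦ (n/2)(μ − √(μ² − 4θαμ)) − θε equals (nμ/4)(2 − nα/ε − ε/(nα)), and it is attained at θ = (μ/(4α))(1 − (nα/ε)²). -/
/-!
In the variable `s = √(μ² - 4θαμ)`, i.e. `θ = (μ² - s²) / (4αμ)`, the objective is a quadratic,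
and completing the square shows that it exceeds the claimed infimum by exactly
`ε / (4αμ) * (s - nαμ/ε)²`. The minimizer `s = nαμ/ε` corresponds to the stated `θ`.
-/

/-- For real `n, α, μ > 0` and `ε ≥ nα`, the infimum over `θ ∈ [0, μ/(4α))` of
`θ ↦ (n/2)(μ - √(μ² - 4θαμ)) - θε` equals `(nμ/4)(2 - nα/ε - ε/(nα))` and is attained
at `θ = (μ/(4α))(1 - (nα/ε)²)`. -/
theorem large_deviations_infimum
    (n α μ ε : ℝ) (hn : 0 < n) (hα : 0 < α) (hμ : 0 < μ) (hε : n * α ≤ ε) :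
    (μ / (4 * α)) * (1 - (n * α / ε) ^ 2) ∈ Set.Ico 0 (μ / (4 * α)) ∧
    (n / 2) * (μ - Real.sqrt (μ ^ 2 - 4 * ((μ / (4 * α)) * (1 - (n * α / ε) ^ 2)) * α * μ))
        - ((μ / (4 * α)) * (1 - (n * α / ε) ^ 2)) * ε
      = (n * μ / 4) * (2 - n * α / ε - ε / (n * α)) ∧
    (∀ θ ∈ Set.Ico 0 (μ / (4 * α)),
        (n * μ / 4) * (2 - n * α / ε - ε / (n * α))
          ≤ (n / 2) * (μ - Real.sqrt (μ ^ 2 - 4 * θ * α * μ)) - θ * ε) := by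
  have hnα : 0 < n * α := mul_pos hn hα
  have hε0 : 0 < ε := lt_of_lt_of_le hnα hε
  have hr0 : 0 < n * α / ε := div_pos hnα hε0
  have hr1 : n * α / ε ≤ 1 := (div_le_one hε0).mpr hε
  have hc : 0 < μ / (4 * α) := by positivity
  refine ⟨⟨?_, ?_⟩, ?_, ?_⟩
  · exact mul_nonneg hc.le (by nlinarith)
  · exact mul_lt_of_lt_one_right hc (by nlinarith)
  · have h : μ ^ 2 - 4 * ((μ / (4 * α)) * (1 - (n * α / ε) ^ 2)) * α * μ
        = (μ * (n * α / ε)) ^ 2 := by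
      field_simp
      ring
    rw [h, Real.sqrt_sq (by positivity)]
    field_simp
    ring
  · rintro θ ⟨-, hθ⟩
    have hθ' : θ * (4 * α) < μ := (lt_div_iff₀ (by positivity)).mp hθ
    have hs := Real.sq_sqrt (show 0 ≤ μ ^ 2 - 4 * θ * α * μ by nlinarith)
    set s := Real.sqrt (μ ^ 2 - 4 * θ * α * μ)
    have hθs : θ = (μ ^ 2 - s ^ 2) / (4 * α * μ) := by
      rw [hs]
      field_simp
      ring
    have key : (n / 2) * (μ - s) - θ * ε - (n * μ / 4) * (2 - n * α / ε - ε / (n * α))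
        = ε / (4 * α * μ) * (s - n * α * μ / ε) ^ 2 := by
      rw [hθs]
      field_simp
      ring
    have hsq : 0 ≤ ε / (4 * α * μ) * (s - n * α * μ / ε) ^ 2 := by positivity
    linarith
end

section
/- Let ξ and η be ℝⁿ-valued random vectors whose joint distribution (i.e., the distribution of the ℝ^{2n}-valued vector (ξ, η)) is Gaussian with zero mean, and let Π ∈ ℝ^{n×n} be symmetric. Then the covariance of the quadratic forms ξᵀΠξ and ηᵀΠη satisfies Cov(ξᵀΠξ, ηᵀΠη) = 2 Tr( Π C Π Cᵀ ), where C := E(ξ ηᵀ) is the cross-covariance matrix of ξ and η. -/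
open Matrix MeasureTheory ProbabilityTheory

/-!
The quadratic forms expand as `∑ Wᵢⱼ ξᵢ ξⱼ` and `∑ Wₖₗ ηₖ ηₗ`, so their covariance is a combination
of fourth-order mixed moments. Isserlis' (Wick's) formula `integral_mul_four_of_gaussian`,
`E[XYZT] = E[XY]E[ZT] + E[XZ]E[YT] + E[XT]E[YZ]`, turns it into
`∑ Wᵢⱼ Wₖₗ (Cᵢₖ Cⱼₗ + Cᵢₗ Cⱼₖ)`, and by symmetry of `W` both halves equal `Tr(W C W Cᵀ)`.

Isserlis' formula itself follows by polarization from the one-dimensional identity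
`E[X⁴] = 3 E[X²]²` (`integral_pow_four_gaussianReal`), which is read off the fourth derivative of
the moment generating function `exp (v t² / 2)`: the product `XYZT` is a signed combination of the
fourth powers `(X ± Y ± Z ± T)⁴`, each of which is again the fourth power of a centered Gaussian.
-/

namespace GaussianQuadraticForms

lemma integral_sq_gaussianReal (v : NNReal) : ∫ x, x ^ 2 ∂gaussianReal 0 v = v := by
  have h := variance_fun_id_gaussianReal (μ := 0) (v := v)
  rw [variance_eq_integral measurable_id'.aemeasurable] at h
  simpa using h

/-- Differentiation of a multiple of the moment generating function
`exp (v t² / 2)` of a centered Gaussian. -/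
lemma deriv_mul_exp {p q : ℝ → ℝ} (v : ℝ) (hp : ∀ t, HasDerivAt p (q t) t) :
    deriv (fun t => p t * Real.exp (v * t ^ 2 / 2))
      = fun t => (q t + p t * (v * t)) * Real.exp (v * t ^ 2 / 2) := by
  ext t
  have h1 : HasDerivAt (fun t : ℝ => v * t ^ 2 / 2) (v * t) t := by
    refine ((((hasDerivAt_id t).pow 2).const_mul v).div_const 2).congr_deriv ?_
    simp
    ring
  refine ((hp t).mul h1.exp).deriv.trans ?_
  ring

lemma integral_pow_four_gaussianReal (v : NNReal) :
    ∫ x, x ^ 4 ∂gaussianReal 0 v = 3 * (v : ℝ) ^ 2 := by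
  have h0 : ∫ x, x ^ 4 ∂gaussianReal 0 v
      = iteratedDeriv 4 (mgf (fun x ↦ x) (gaussianReal 0 v)) 0 := by
    rw [iteratedDeriv_mgf_zero] <;> simp
  have hm : mgf (fun x ↦ x) (gaussianReal 0 v)
      = fun t => (1 : ℝ) * Real.exp (v * t ^ 2 / 2) := by
    rw [mgf_fun_id_gaussianReal]
    simp
  have d1 := deriv_mul_exp (p := fun _ => 1) (q := fun _ => 0) v (fun t => hasDerivAt_const t 1)
  have d2 := deriv_mul_exp (p := fun t => 0 + 1 * (v * t)) (q := fun _ => v) v (fun t => by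
    simpa using (hasDerivAt_id t).const_mul (v : ℝ))
  have d3 := deriv_mul_exp (p := fun t => v + (0 + 1 * (v * t)) * (v * t))
    (q := fun t => 2 * v ^ 2 * t) v (fun t => by
      have h := ((hasDerivAt_id t).const_mul (v : ℝ))
      refine (((h.const_mul 1).const_add 0).mul h).const_add (v : ℝ) |>.congr_deriv ?_
      simp
      ring)
  have d4 := deriv_mul_exp
    (p := fun t => 2 * v ^ 2 * t + (v + (0 + 1 * (v * t)) * (v * t)) * (v * t))
    (q := fun t => 3 * v ^ 2 + 3 * v ^ 3 * t ^ 2) v (fun t => by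
      have h := ((hasDerivAt_id t).const_mul (v : ℝ))
      refine ((hasDerivAt_id t).const_mul (2 * (v : ℝ) ^ 2)).add
        (((((h.const_mul 1).const_add 0).mul h).const_add (v : ℝ)).mul h) |>.congr_deriv ?_
      simp
      ring)
  rw [h0, hm, iteratedDeriv_succ, iteratedDeriv_succ, iteratedDeriv_succ, iteratedDeriv_one,
    d1, d2, d3, d4]
  simp

section Isserlis

variable {Ω : Type*} {mΩ : MeasurableSpace Ω} {P : Measure Ω}

lemma memLp_four_of_map_eq {X : Ω → ℝ} (hX : Measurable X) {v : NNReal}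
    (h : P.map X = gaussianReal 0 v) : MemLp X 4 P := by
  have h4 : MemLp id 4 (P.map X) := by
    rw [h]
    exact memLp_id_gaussianReal' 4 (by norm_num)
  exact (memLp_map_measure_iff (by fun_prop) hX.aemeasurable).1 h4

lemma integral_pow_four_of_map_eq {X : Ω → ℝ} (hX : Measurable X) {v : NNReal}
    (h : P.map X = gaussianReal 0 v) : ∫ ω, X ω ^ 4 ∂P = 3 * (∫ ω, X ω ^ 2 ∂P) ^ 2 := by
  have h4 := integral_pow_four_gaussianReal v
  have h2 := integral_sq_gaussianReal v
  rw [← h, integral_map hX.aemeasurable (by fun_prop)] at h4 h2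
  rw [h4, h2]

lemma memLp_two_mul {X Y : Ω → ℝ} (hX : MemLp X 4 P) (hY : MemLp Y 4 P) :
    MemLp (fun ω => X ω * Y ω) 2 P := by
  have : ENNReal.HolderTriple 4 4 2 := ⟨by
    rw [← two_mul, show (4 : ENNReal) = 2 * 2 by norm_num,
      ENNReal.mul_inv (by norm_num) (by norm_num), ← mul_assoc,
      ENNReal.mul_inv_cancel (by norm_num) (by norm_num), one_mul]⟩
  exact hY.mul' hX

lemma integrable_mul_four {X Y Z T : Ω → ℝ} (hX : MemLp X 4 P) (hY : MemLp Y 4 P)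
    (hZ : MemLp Z 4 P) (hT : MemLp T 4 P) :
    Integrable (fun ω => (X ω * Y ω) * (Z ω * T ω)) P :=
  (memLp_two_mul hX hY).integrable_mul (memLp_two_mul hZ hT)

/-- **Isserlis' formula** for four jointly Gaussian centered real random variables, joint
Gaussianity being expressed through linear combinations. -/
lemma integral_mul_four_of_gaussian [IsProbabilityMeasure P] {X Y Z T : Ω → ℝ}
    (hX : Measurable X) (hY : Measurable Y) (hZ : Measurable Z) (hT : Measurable T)
    (iX : MemLp X 4 P) (iY : MemLp Y 4 P) (iZ : MemLp Z 4 P) (iT : MemLp T 4 P)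
    (h : ∀ a b c : ℝ, ∃ v : NNReal,
      P.map (fun ω => X ω + a * Y ω + (b * Z ω + c * T ω)) = gaussianReal 0 v) :
    ∫ ω, (X ω * Y ω) * (Z ω * T ω) ∂P
      = (∫ ω, X ω * Y ω ∂P) * (∫ ω, Z ω * T ω ∂P)
        + (∫ ω, X ω * Z ω ∂P) * (∫ ω, Y ω * T ω ∂P)
        + (∫ ω, X ω * T ω ∂P) * (∫ ω, Y ω * Z ω ∂P) := by
  have hmul {U V : Ω → ℝ} (hU : MemLp U 4 P) (hV : MemLp V 4 P) :
      Integrable (fun ω => U ω * V ω) P := (memLp_two_mul hU hV).integrable (by norm_num)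
  have hsq (a b c : ℝ) : ∫ ω, (X ω + a * Y ω + (b * Z ω + c * T ω)) ^ 2 ∂P
      = (∫ ω, X ω * X ω ∂P) + a ^ 2 * (∫ ω, Y ω * Y ω ∂P) + b ^ 2 * (∫ ω, Z ω * Z ω ∂P)
        + c ^ 2 * (∫ ω, T ω * T ω ∂P) + 2 * a * (∫ ω, X ω * Y ω ∂P)
        + 2 * b * (∫ ω, X ω * Z ω ∂P) + 2 * c * (∫ ω, X ω * T ω ∂P)
        + 2 * a * b * (∫ ω, Y ω * Z ω ∂P) + 2 * a * c * (∫ ω, Y ω * T ω ∂P)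
        + 2 * b * c * (∫ ω, Z ω * T ω ∂P) := by
    have j1 := hmul iX iX
    have j2 := (hmul iY iY).const_mul (a ^ 2)
    have j3 := (hmul iZ iZ).const_mul (b ^ 2)
    have j4 := (hmul iT iT).const_mul (c ^ 2)
    have j5 := (hmul iX iY).const_mul (2 * a)
    have j6 := (hmul iX iZ).const_mul (2 * b)
    have j7 := (hmul iX iT).const_mul (2 * c)
    have j8 := (hmul iY iZ).const_mul (2 * a * b)
    have j9 := (hmul iY iT).const_mul (2 * a * c)
    have j10 := (hmul iZ iT).const_mul (2 * b * c)
    simp only [← integral_const_mul]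
    rw [← integral_add (by fun_prop) (by fun_prop), ← integral_add (by fun_prop) (by fun_prop),
      ← integral_add (by fun_prop) (by fun_prop), ← integral_add (by fun_prop) (by fun_prop),
      ← integral_add (by fun_prop) (by fun_prop), ← integral_add (by fun_prop) (by fun_prop),
      ← integral_add (by fun_prop) (by fun_prop), ← integral_add (by fun_prop) (by fun_prop),
      ← integral_add (by fun_prop) (by fun_prop)]
    congr 1
    ext ω
    ring
  have hi4 (a b c : ℝ) :
      Integrable (fun ω => (X ω + a * Y ω + (b * Z ω + c * T ω)) ^ 4) P := by
    obtain ⟨v, hv⟩ := h a b c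
    have hL := memLp_four_of_map_eq (by fun_prop) hv
    refine (integrable_mul_four hL hL hL hL).congr (.of_forall fun ω => ?_)
    ring
  have h4 (a b c : ℝ) : ∫ ω, (X ω + a * Y ω + (b * Z ω + c * T ω)) ^ 4 ∂P
      = 3 * (∫ ω, (X ω + a * Y ω + (b * Z ω + c * T ω)) ^ 2 ∂P) ^ 2 := by
    obtain ⟨v, hv⟩ := h a b c
    exact integral_pow_four_of_map_eq (by fun_prop) hv
  -- Polarization: the signed sum of `(X ± Y ± Z ± T)⁴` over all signs is `8 * 4! * XYZT`.
  have key : 192 * ∫ ω, (X ω * Y ω) * (Z ω * T ω) ∂P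
      = (∫ ω, (X ω + 1 * Y ω + (1 * Z ω + 1 * T ω)) ^ 4 ∂P)
        - (∫ ω, (X ω + (-1) * Y ω + (1 * Z ω + 1 * T ω)) ^ 4 ∂P)
        - (∫ ω, (X ω + 1 * Y ω + ((-1) * Z ω + 1 * T ω)) ^ 4 ∂P)
        - (∫ ω, (X ω + 1 * Y ω + (1 * Z ω + (-1) * T ω)) ^ 4 ∂P)
        + (∫ ω, (X ω + (-1) * Y ω + ((-1) * Z ω + 1 * T ω)) ^ 4 ∂P)
        + (∫ ω, (X ω + (-1) * Y ω + (1 * Z ω + (-1) * T ω)) ^ 4 ∂P)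
        + (∫ ω, (X ω + 1 * Y ω + ((-1) * Z ω + (-1) * T ω)) ^ 4 ∂P)
        - (∫ ω, (X ω + (-1) * Y ω + ((-1) * Z ω + (-1) * T ω)) ^ 4 ∂P) := by
    have k1 := hi4 1 1 1
    have k2 := k1.sub (hi4 (-1) 1 1)
    have k3 := k2.sub (hi4 1 (-1) 1)
    have k4 := k3.sub (hi4 1 1 (-1))
    have k5 := k4.add (hi4 (-1) (-1) 1)
    have k6 := k5.add (hi4 (-1) 1 (-1))
    have k7 := k6.add (hi4 1 (-1) (-1))
    rw [← integral_const_mul, ← integral_sub' k1 (hi4 _ _ _), ← integral_sub' k2 (hi4 _ _ _),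
      ← integral_sub' k3 (hi4 _ _ _), ← integral_add' k4 (hi4 _ _ _),
      ← integral_add' k5 (hi4 _ _ _), ← integral_add' k6 (hi4 _ _ _),
      ← integral_sub' k7 (hi4 _ _ _)]
    congr 1
    ext ω
    simp only [Pi.add_apply, Pi.sub_apply]
    ring
  rw [h4, h4, h4, h4, h4, h4, h4, h4] at key
  simp only [hsq] at key
  linarith

end Isserlis

lemma dotProduct_mulVec_eq_sum {n : ℕ} (W : Matrix (Fin n) (Fin n) ℝ) (x : Fin n → ℝ) :
    x ⬝ᵥ W.mulVec x = ∑ i, ∑ j, W i j * (x i * x j) := by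
  simp only [dotProduct, mulVec, Finset.mul_sum]
  refine Finset.sum_congr rfl fun i _ => Finset.sum_congr rfl fun j _ => ?_
  ring

/-- The contraction of `W ⊗ W` against `Cᵢₖ Cⱼₗ + Cᵢₗ Cⱼₖ`; symmetry of `W` makes the two
terms contribute equally. -/
lemma sum_eq_trace {n : ℕ} (W C : Matrix (Fin n) (Fin n) ℝ) (hW : Wᵀ = W) :
    ∑ i, ∑ j, ∑ k, ∑ l, W i j * W k l * (C i k * C j l + C i l * C j k)
      = 2 * (W * C * W * Cᵀ).trace := by
  have hs (i j : Fin n) : W i j = W j i := congrFun (congrFun hW j) i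
  have h1 : (W * C * W * Cᵀ).trace
      = ∑ i, ∑ j, ∑ k, ∑ l, W i j * W k l * (C i l * C j k) := by
    simp only [trace, diag_apply, Matrix.mul_apply, transpose_apply, Finset.sum_mul]
    refine Finset.sum_congr rfl fun i _ => ?_
    rw [Finset.sum_comm_cycle]
    refine Finset.sum_congr rfl fun j _ => ?_
    rw [Finset.sum_comm]
    refine Finset.sum_congr rfl fun k _ => Finset.sum_congr rfl fun l _ => ?_
    ring
  have h2 : ∑ i, ∑ j, ∑ k, ∑ l, W i j * W k l * (C i k * C j l)
      = ∑ i, ∑ j, ∑ k, ∑ l, W i j * W k l * (C i l * C j k) := by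
    refine Finset.sum_congr rfl fun i _ => Finset.sum_congr rfl fun j _ => ?_
    rw [Finset.sum_comm]
    refine Finset.sum_congr rfl fun k _ => Finset.sum_congr rfl fun l _ => ?_
    rw [hs l k]
  simp only [mul_add, Finset.sum_add_distrib]
  rw [h1, h2]
  ring

end GaussianQuadraticForms

open GaussianQuadraticForms in
/-- For jointly Gaussian zero-mean random vectors `ξ, η` in `ℝⁿ` (every linear combination
of their coordinates has a centered Gaussian distribution) and a symmetric matrix `W`,
`Cov(ξᵀWξ, ηᵀWη) = 2 Tr(W C W Cᵀ)` where `C = E(ξηᵀ)` is the cross-covariance matrix. -/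
theorem covariance_of_gaussian_quadratic_forms
    {Ω : Type*} [MeasureSpace Ω] [IsProbabilityMeasure (ℙ : Measure Ω)]
    {n : ℕ} (ξ η : Ω → Fin n → ℝ)
    (hξ : Measurable ξ) (hη : Measurable η)
    (hGauss : ∀ u v : Fin n → ℝ, ∃ σ2 : NNReal,
      Measure.map (fun ω => u ⬝ᵥ ξ ω + v ⬝ᵥ η ω) ℙ = gaussianReal 0 σ2)
    (W : Matrix (Fin n) (Fin n) ℝ) (hW : Wᵀ = W) :
    (∫ ω, (ξ ω ⬝ᵥ W.mulVec (ξ ω)) * (η ω ⬝ᵥ W.mulVec (η ω)))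
        - (∫ ω, ξ ω ⬝ᵥ W.mulVec (ξ ω)) * (∫ ω, η ω ⬝ᵥ W.mulVec (η ω))
      = 2 * (W * (Matrix.of fun i j => ∫ ω, ξ ω i * η ω j)
              * W * (Matrix.of fun i j => ∫ ω, ξ ω i * η ω j)ᵀ).trace := by
  have mξ (i : Fin n) : Measurable fun ω => ξ ω i := (measurable_pi_apply i).comp hξ
  have mη (i : Fin n) : Measurable fun ω => η ω i := (measurable_pi_apply i).comp hη
  have iξ (i : Fin n) : MemLp (fun ω => ξ ω i) 4 ℙ := by
    obtain ⟨v, hv⟩ := hGauss (Pi.single i 1) 0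
    exact memLp_four_of_map_eq (mξ i) (v := v) (by simpa using hv)
  have iη (i : Fin n) : MemLp (fun ω => η ω i) 4 ℙ := by
    obtain ⟨v, hv⟩ := hGauss 0 (Pi.single i 1)
    exact memLp_four_of_map_eq (mη i) (v := v) (by simpa using hv)
  have hwick (i j k l : Fin n) :
      ∫ ω, (ξ ω i * ξ ω j) * (η ω k * η ω l)
        = (∫ ω, ξ ω i * ξ ω j) * (∫ ω, η ω k * η ω l)
          + (∫ ω, ξ ω i * η ω k) * (∫ ω, ξ ω j * η ω l)
          + (∫ ω, ξ ω i * η ω l) * (∫ ω, ξ ω j * η ω k) := by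
    refine integral_mul_four_of_gaussian (mξ i) (mξ j) (mη k) (mη l) (iξ i) (iξ j) (iη k) (iη l)
      fun a b c => ?_
    obtain ⟨v, hv⟩ := hGauss (Pi.single i 1 + Pi.single j a) (Pi.single k b + Pi.single l c)
    exact ⟨v, by simpa [add_dotProduct] using hv⟩
  have qξ (i j : Fin n) : Integrable (fun ω => W i j * (ξ ω i * ξ ω j)) :=
    ((memLp_two_mul (iξ i) (iξ j)).integrable (by norm_num)).const_mul _
  have qη (i j : Fin n) : Integrable (fun ω => W i j * (η ω i * η ω j)) :=
    ((memLp_two_mul (iη i) (iη j)).integrable (by norm_num)).const_mul _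
  have q4 (i j k l : Fin n) :
      Integrable (fun ω => W i j * (ξ ω i * ξ ω j) * (W k l * (η ω k * η ω l))) := by
    refine ((integrable_mul_four (iξ i) (iξ j) (iη k) (iη l)).const_mul
      (W i j * W k l)).congr (.of_forall fun ω => ?_)
    ring
  have eξ : ∫ ω, ξ ω ⬝ᵥ W.mulVec (ξ ω) = ∑ i, ∑ j, W i j * ∫ ω, ξ ω i * ξ ω j := by
    simp only [dotProduct_mulVec_eq_sum, ← integral_const_mul]
    rw [integral_finsetSum _ fun i _ => integrable_finsetSum _ fun j _ => qξ i j]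
    exact Finset.sum_congr rfl fun i _ => integral_finsetSum _ fun j _ => qξ i j
  have eη : ∫ ω, η ω ⬝ᵥ W.mulVec (η ω) = ∑ i, ∑ j, W i j * ∫ ω, η ω i * η ω j := by
    simp only [dotProduct_mulVec_eq_sum, ← integral_const_mul]
    rw [integral_finsetSum _ fun i _ => integrable_finsetSum _ fun j _ => qη i j]
    exact Finset.sum_congr rfl fun i _ => integral_finsetSum _ fun j _ => qη i j
  have e4 : ∫ ω, (ξ ω ⬝ᵥ W.mulVec (ξ ω)) * (η ω ⬝ᵥ W.mulVec (η ω))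
      = ∑ i, ∑ j, ∑ k, ∑ l, W i j * W k l * ∫ ω, (ξ ω i * ξ ω j) * (η ω k * η ω l) := by
    simp only [dotProduct_mulVec_eq_sum, Finset.sum_mul]
    simp only [Finset.mul_sum]
    rw [integral_finsetSum _ fun i _ => integrable_finsetSum _ fun j _ =>
      integrable_finsetSum _ fun k _ => integrable_finsetSum _ fun l _ => q4 i j k l]
    refine Finset.sum_congr rfl fun i _ => ?_
    rw [integral_finsetSum _ fun j _ =>
      integrable_finsetSum _ fun k _ => integrable_finsetSum _ fun l _ => q4 i j k l]
    refine Finset.sum_congr rfl fun j _ => ?_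
    rw [integral_finsetSum _ fun k _ => integrable_finsetSum _ fun l _ => q4 i j k l]
    refine Finset.sum_congr rfl fun k _ => ?_
    rw [integral_finsetSum _ fun l _ => q4 i j k l]
    refine Finset.sum_congr rfl fun l _ => ?_
    rw [← integral_const_mul]
    congr 1
    ext ω
    ring
  rw [← sum_eq_trace W _ hW, e4, eξ, eη]
  simp only [Finset.sum_mul]
  simp only [Finset.mul_sum, ← Finset.sum_sub_distrib, of_apply]
  refine Finset.sum_congr rfl fun i _ => Finset.sum_congr rfl fun j _ =>
    Finset.sum_congr rfl fun k _ => Finset.sum_congr rfl fun l _ => ?_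
  rw [hwick]
  ring
end
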